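/- Let U be a finite set with |U| = m, let α ∈ (0,1], and let ν be a probability distribution on binom(U,k) that is (1/α)-entropically independent, with marginals p_i = P_{S∼ν}[i∈S]. Let β ∈ (0,1), set C = 1 + √β, and let R ⊆ U satisfy: p_i ≤ Ck/m for all i ∈ U and p_i ≥ k/(Cm) for all i ∈ R. Let ε ∈ (0, 1/e], let t be an integer with 1 ≤ t ≤ k/2, and let T ∈ binom(U,t) satisfy ν_t(T) ≥ ε^t, where ν_t = νD_{k→t}. Let γ > 0 satisfy √β ≤ min{1/(3γ), (t/(αk))·log(1/ε)}, and let τ ≥ m^γ·γ(1+γ)·(12t/(αk))·log(1/ε). Then ∑_{i∈R∖T} ν_{t+1|T}(i) · ( k·ν_{t+1|T}(i)/p_i )^γ ≤ exp(τ), where ν_{t+1|T}(i) = P_{S∼ν}[i∈S | T⊆S]/(k−t) for i ∈ U∖T. -/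

import Mathlib

open Finset

/-!
Conditioning `ν` on `T ⊆ S` costs relative entropy `-log ℙ[T ⊆ S] ≤ t log (1/ε)`. Entropic
independence divides this cost by `αk` when passing to marginals, and the elements of `T`, which
get conditional marginal `1`, contribute nonnegatively. As the marginals of `ν` are at most `Ck/m`,
the conditional marginal distribution `q` on `Tᶜ` has relative entropy `O(t log (1/ε) / (αk))` with
respect to the uniform distribution. Finally, on `[0, M]` the function `y ^ (1 + γ)` exceeds its
tangent line at `1` by at most `γ (1 + γ) M ^ γ (y log y + 1 - y)`, which turns an entropy bound
into a moment bound.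
-/

section PowerEntropy

open InformationTheory (klFun klFun_apply klFun_one continuous_klFun hasDerivAt_klFun)

/-- The amount by which `γ (1 + γ) M ^ γ klFun x` exceeds the error of the tangent line at `1` of
`x ↦ x ^ (1 + γ)`. It serves to compare the two Bregman divergences on `[0, M]`. -/
noncomputable def rpowKlGap (M γ x : ℝ) : ℝ :=
  γ * (1 + γ) * M ^ γ * klFun x - (x ^ (1 + γ) - (1 + (1 + γ) * (x - 1)))

variable {M γ x : ℝ}

lemma continuous_rpowKlGap (hγ : 0 ≤ γ) : Continuous (rpowKlGap M γ) := by
  have hrpow : Continuous fun x : ℝ => x ^ (1 + γ) := Real.continuous_rpow_const (by linarith)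
  unfold rpowKlGap
  fun_prop

lemma rpowKlGap_one (M γ : ℝ) : rpowKlGap M γ 1 = 0 := by simp [rpowKlGap, klFun_one]

lemma hasDerivAt_rpowKlGap (M γ : ℝ) (hx : 0 < x) :
    HasDerivAt (rpowKlGap M γ) ((1 + γ) * (γ * M ^ γ * Real.log x - (x ^ γ - 1))) x := by
  have hkl := (hasDerivAt_klFun hx.ne').const_mul (γ * (1 + γ) * M ^ γ)
  have hrpow := Real.hasDerivAt_rpow_const (p := 1 + γ) (Or.inl hx.ne')
  have htangent := (((hasDerivAt_id x).sub_const 1).const_mul (1 + γ)).const_add 1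
  refine (hkl.sub (hrpow.sub htangent)).congr_deriv ?_
  rw [add_sub_cancel_left]
  ring

lemma mul_rpow_mul_log_le_rpow_sub_one (hM : 1 ≤ M) (hγ : 0 ≤ γ) (hx : 0 < x) (hx1 : x ≤ 1) :
    γ * M ^ γ * Real.log x ≤ x ^ γ - 1 :=
  calc γ * M ^ γ * Real.log x = M ^ γ * Real.log (x ^ γ) := by rw [Real.log_rpow hx]; ring
    _ ≤ Real.log (x ^ γ) := mul_le_of_one_le_left
        (Real.log_nonpos (by positivity) (Real.rpow_le_one hx.le hx1 hγ)) (Real.one_le_rpow hM hγ)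
    _ ≤ x ^ γ - 1 := Real.log_le_sub_one_of_pos (by positivity)

lemma rpow_sub_one_le_mul_rpow_mul_log (hγ : 0 ≤ γ) (hx : 1 ≤ x) (hxM : x ≤ M) :
    x ^ γ - 1 ≤ γ * M ^ γ * Real.log x := by
  have hx0 : 0 < x := zero_lt_one.trans_le hx
  have hxγ : 0 < x ^ γ := by positivity
  calc x ^ γ - 1 = x ^ γ * (1 - (x ^ γ)⁻¹) := by field_simp
    _ ≤ x ^ γ * Real.log (x ^ γ) := by gcongr; exact Real.one_sub_inv_le_log_of_pos hxγ
    _ ≤ M ^ γ * Real.log (x ^ γ) := by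
        gcongr
        exact Real.log_nonneg (Real.one_le_rpow hx hγ)
    _ = γ * M ^ γ * Real.log x := by rw [Real.log_rpow hx0]; ring

lemma antitoneOn_rpowKlGap (hM : 1 ≤ M) (hγ : 0 ≤ γ) :
    AntitoneOn (rpowKlGap M γ) (Set.Icc 0 1) := by
  refine antitoneOn_of_hasDerivWithinAt_nonpos (convex_Icc 0 1)
    (continuous_rpowKlGap hγ).continuousOn
    (f' := fun x => (1 + γ) * (γ * M ^ γ * Real.log x - (x ^ γ - 1))) ?_ ?_ <;>
    intro x hx <;> rw [interior_Icc] at hx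
  · exact (hasDerivAt_rpowKlGap M γ hx.1).hasDerivWithinAt
  · exact mul_nonpos_of_nonneg_of_nonpos (by linarith)
      (sub_nonpos.2 (mul_rpow_mul_log_le_rpow_sub_one hM hγ hx.1 hx.2.le))

lemma monotoneOn_rpowKlGap (hγ : 0 ≤ γ) : MonotoneOn (rpowKlGap M γ) (Set.Icc 1 M) := by
  refine monotoneOn_of_hasDerivWithinAt_nonneg (convex_Icc 1 M)
    (continuous_rpowKlGap hγ).continuousOn
    (f' := fun x => (1 + γ) * (γ * M ^ γ * Real.log x - (x ^ γ - 1))) ?_ ?_ <;>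
    intro x hx <;> rw [interior_Icc] at hx
  · exact (hasDerivAt_rpowKlGap M γ (zero_lt_one.trans hx.1)).hasDerivWithinAt
  · exact mul_nonneg (by linarith)
      (sub_nonneg.2 (rpow_sub_one_le_mul_rpow_mul_log hγ hx.1.le hx.2.le))

lemma rpowKlGap_nonneg (hM : 1 ≤ M) (hγ : 0 ≤ γ) (hx0 : 0 ≤ x) (hxM : x ≤ M) :
    0 ≤ rpowKlGap M γ x := by
  rw [← rpowKlGap_one M γ]
  rcases le_total x 1 with hx | hx
  · exact antitoneOn_rpowKlGap hM hγ ⟨hx0, hx⟩ (Set.right_mem_Icc.2 zero_le_one) hx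
  · exact monotoneOn_rpowKlGap hγ (Set.left_mem_Icc.2 hM) ⟨hx, hxM⟩ hx

lemma rpow_one_add_le (hM : 1 ≤ M) (hγ : 0 ≤ γ) (hx0 : 0 ≤ x) (hxM : x ≤ M) :
    x ^ (1 + γ) ≤ 1 + (1 + γ) * (x - 1) + γ * (1 + γ) * M ^ γ * klFun x := by
  have h := rpowKlGap_nonneg hM hγ hx0 hxM
  unfold rpowKlGap at h
  linarith

lemma le_mul_one_add_mul_rpow (hM : 1 ≤ M) (hγ : 0 ≤ γ) : γ ≤ γ * (1 + γ) * M ^ γ :=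
  calc γ = γ * 1 * 1 := by ring
    _ ≤ γ * (1 + γ) * M ^ γ := by
        gcongr
        · linarith
        · exact Real.one_le_rpow hM hγ

theorem sum_mul_div_rpow_le_one_add_sum_mul_log {ι : Type*} {s : Finset ι} {q p : ι → ℝ}
    (hγ : 0 ≤ γ) (hq : ∀ i ∈ s, 0 ≤ q i) (hq_sum : ∑ i ∈ s, q i = 1) (hp : ∀ i ∈ s, 0 < p i)
    (hp_sum : ∑ i ∈ s, p i ≤ 1) (hqp : ∀ i ∈ s, q i ≤ M * p i) :
    ∑ i ∈ s, q i * (q i / p i) ^ γ ≤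
      1 + γ * (1 + γ) * M ^ γ * ∑ i ∈ s, q i * Real.log (q i / p i) := by
  set K := γ * (1 + γ) * M ^ γ with hK
  have hM : 1 ≤ M := by
    have hMp : 1 ≤ M * ∑ i ∈ s, p i := by
      rw [← hq_sum, mul_sum]
      exact sum_le_sum hqp
    have hM0 : 0 < M := pos_of_mul_pos_left (zero_lt_one.trans_le hMp)
      (sum_nonneg fun i hi => (hp i hi).le)
    exact hMp.trans (mul_le_of_le_one_right hM0.le hp_sum)
  have hpoint : ∀ i ∈ s, q i * (q i / p i) ^ γ ≤
      (K - γ) * p i + (1 + γ - K) * q i + K * (q i * Real.log (q i / p i)) := by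
    intro i hi
    have hpi := hp i hi
    have hy : 0 ≤ q i / p i := div_nonneg (hq i hi) hpi.le
    have h := rpow_one_add_le hM hγ hy ((div_le_iff₀ hpi).2 (hqp i hi))
    rw [Real.rpow_add' hy (by linarith), Real.rpow_one, klFun_apply, ← hK] at h
    have hqi : p i * (q i / p i) = q i := mul_div_cancel₀ _ hpi.ne'
    generalize q i / p i = y at *
    rw [← hqi]
    linarith [mul_le_mul_of_nonneg_left h hpi.le]
  calc ∑ i ∈ s, q i * (q i / p i) ^ γ
      ≤ (K - γ) * ∑ i ∈ s, p i + (1 + γ - K) * 1 + K * ∑ i ∈ s, q i * Real.log (q i / p i) := by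
        simpa only [sum_add_distrib, ← mul_sum, hq_sum] using sum_le_sum hpoint
    _ ≤ (K - γ) * 1 + (1 + γ - K) * 1 + K * ∑ i ∈ s, q i * Real.log (q i / p i) := by
        gcongr
        exact sub_nonneg.2 (le_mul_one_add_mul_rpow hM hγ)
    _ = 1 + K * ∑ i ∈ s, q i * Real.log (q i / p i) := by ring

end PowerEntropy

section Conditioning

/-- The relative entropy `DKL(q ‖ p)` of weights on a finite type. It agrees with the usual
notion when `q` vanishes wherever `p` does; elsewhere the junk value `log (q x / 0) = 0` replaces
`∞`. -/
noncomputable def relEntropy {ι : Type*} [Fintype ι] (q p : ι → ℝ) : ℝ :=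
  ∑ x, q x * Real.log (q x / p x)

variable {U : Type*} [Fintype U]

/-- A probability distribution on the `k`-element subsets of `U`, encoded as a weight on all
subsets. -/
structure IsSliceDistribution (k : ℕ) (ν : Finset U → ℝ) : Prop where
  nonneg : ∀ S, 0 ≤ ν S
  card_eq : ∀ S, ν S ≠ 0 → S.card = k
  sum_eq_one : ∑ S, ν S = 1

variable {k : ℕ} {ν : Finset U → ℝ} {T : Finset U} {i : U} {α : ℝ}

lemma IsSliceDistribution.le_card (hν : IsSliceDistribution k ν) : k ≤ Fintype.card U := by
  have hsum : ∑ S, ν S ≠ 0 := hν.sum_eq_one ▸ one_ne_zero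
  obtain ⟨S, -, hS⟩ := exists_ne_zero_of_sum_ne_zero hsum
  exact hν.card_eq S hS ▸ card_le_univ S

variable [DecidableEq U]

/-- The marginal `ℙ[i ∈ S]` of a random set `S` with distribution `ν`; thus `νD_{k→1}` is
`marginal ν / k`. -/
def marginal (ν : Finset U → ℝ) (i : U) : ℝ :=
  ∑ S ∈ univ.filter (fun S : Finset U => i ∈ S), ν S

/-- The probability `ℙ[T ⊆ S]` for a random set `S` with distribution `ν`; thus `νD_{k→t}` is
`supersetMass ν / binom(k,t)`. -/
def supersetMass (ν : Finset U → ℝ) (T : Finset U) : ℝ :=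
  ∑ S ∈ univ.filter (fun S : Finset U => T ⊆ S), ν S

/-- The distribution `ν` conditioned on the event `T ⊆ S`; identically `0` if that event is null. -/
noncomputable def conditioned (ν : Finset U → ℝ) (T S : Finset U) : ℝ :=
  if T ⊆ S then ν S / supersetMass ν T else 0

/-- The conditional marginal distribution `ν_{t+1|T}`, where `t` is the cardinality of `T`. It is a
distribution on `Tᶜ`, but also takes (irrelevant) values on `T`. -/
noncomputable def condMarginal (ν : Finset U → ℝ) (k : ℕ) (T : Finset U) (i : U) : ℝ :=
  (∑ S ∈ univ.filter (fun S : Finset U => T ⊆ S ∧ i ∈ S), ν S) / supersetMass ν T /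
    ((k : ℝ) - T.card)

/-- `(1/α)`-entropic independence of a distribution `ν` on `k`-element subsets. Distributions `ρ`
that are not absolutely continuous with respect to `ν` are left out, since then `DKL(ρ ‖ ν) = ∞`. -/
def IsEntropicallyIndependent (α : ℝ) (k : ℕ) (ν : Finset U → ℝ) : Prop :=
  ∀ ρ : Finset U → ℝ, IsSliceDistribution k ρ → (∀ S, ν S = 0 → ρ S = 0) →
    relEntropy (fun i => marginal ρ i / k) (fun i => marginal ν i / k) ≤
      1 / (α * k) * relEntropy ρ ν

namespace IsSliceDistribution

lemma marginal_nonneg (hν : IsSliceDistribution k ν) (i : U) : 0 ≤ marginal ν i :=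
  sum_nonneg fun S _ => hν.nonneg S

lemma marginal_le_one (hν : IsSliceDistribution k ν) (i : U) : marginal ν i ≤ 1 :=
  hν.sum_eq_one ▸ sum_le_univ_sum_of_nonneg hν.nonneg

lemma supersetMass_nonneg (hν : IsSliceDistribution k ν) (T : Finset U) : 0 ≤ supersetMass ν T :=
  sum_nonneg fun S _ => hν.nonneg S

lemma sum_marginal (hν : IsSliceDistribution k ν) : ∑ i, marginal ν i = k :=
  calc ∑ i, marginal ν i = ∑ S, S.card * ν S := by
        simp only [marginal, sum_filter]
        rw [sum_comm]
        refine sum_congr rfl fun S _ => ?_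
        rw [← sum_filter, sum_const, nsmul_eq_mul, filter_univ_mem]
    _ = ∑ S, k * ν S := by
        refine sum_congr rfl fun S _ => ?_
        rcases eq_or_ne (ν S) 0 with h | h
        · simp [h]
        · rw [hν.card_eq S h]
    _ = k := by rw [← mul_sum, hν.sum_eq_one, mul_one]

end IsSliceDistribution

lemma conditioned_eq_zero_of_eq_zero {S : Finset U} (h : ν S = 0) : conditioned ν T S = 0 := by
  simp [conditioned, h]

lemma sum_conditioned (hT : supersetMass ν T ≠ 0) : ∑ S, conditioned ν T S = 1 := by
  simp only [conditioned]
  rw [← sum_filter, ← sum_div]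
  exact div_self hT

lemma isSliceDistribution_conditioned (hν : IsSliceDistribution k ν)
    (hT : supersetMass ν T ≠ 0) : IsSliceDistribution k (conditioned ν T) where
  nonneg S := by
    unfold conditioned
    split_ifs
    exacts [div_nonneg (hν.nonneg S) (hν.supersetMass_nonneg T), le_rfl]
  card_eq S hS := hν.card_eq S (mt conditioned_eq_zero_of_eq_zero hS)
  sum_eq_one := sum_conditioned hT

lemma relEntropy_conditioned (hT : supersetMass ν T ≠ 0) :
    relEntropy (conditioned ν T) ν = -Real.log (supersetMass ν T) := by
  have hterm : ∀ S, conditioned ν T S * Real.log (conditioned ν T S / ν S) =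
      conditioned ν T S * -Real.log (supersetMass ν T) := by
    intro S
    rcases eq_or_ne (conditioned ν T S) 0 with h | h
    · simp [h]
    · have hS : ν S ≠ 0 := mt conditioned_eq_zero_of_eq_zero h
      have hTS : T ⊆ S := by
        by_contra hTS
        exact h (if_neg hTS)
      have hratio : conditioned ν T S / ν S = (supersetMass ν T)⁻¹ := by
        rw [conditioned, if_pos hTS]
        field_simp
      rw [hratio, Real.log_inv]
  rw [relEntropy, sum_congr rfl fun S _ => hterm S, ← sum_mul, sum_conditioned hT, one_mul]

lemma marginal_conditioned (ν : Finset U → ℝ) (T : Finset U) (i : U) :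
    marginal (conditioned ν T) i =
      (∑ S ∈ univ.filter (fun S : Finset U => T ⊆ S ∧ i ∈ S), ν S) / supersetMass ν T := by
  simp only [marginal, conditioned]
  rw [← sum_filter, filter_filter, ← sum_div]
  simp only [and_comm]

lemma marginal_conditioned_of_mem (hT : supersetMass ν T ≠ 0) (hi : i ∈ T) :
    marginal (conditioned ν T) i = 1 := by
  have hfilter : univ.filter (fun S : Finset U => T ⊆ S ∧ i ∈ S) =
      univ.filter (fun S : Finset U => T ⊆ S) :=
    filter_congr fun S _ => and_iff_left_of_imp fun hTS => hTS hi
  rw [marginal_conditioned, hfilter]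
  exact div_self hT

lemma IsSliceDistribution.marginal_conditioned_eq_zero (hν : IsSliceDistribution k ν)
    (hi : marginal ν i = 0) : marginal (conditioned ν T) i = 0 :=
  sum_eq_zero fun S hS => conditioned_eq_zero_of_eq_zero
    ((sum_eq_zero_iff_of_nonneg fun S _ => hν.nonneg S).1 hi S hS)

lemma IsSliceDistribution.sum_compl_marginal_conditioned (hν : IsSliceDistribution k ν)
    (hT : supersetMass ν T ≠ 0) :
    ∑ i ∈ Tᶜ, marginal (conditioned ν T) i = k - T.card := by
  have hsum := (isSliceDistribution_conditioned hν hT).sum_marginal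
  rw [← sum_add_sum_compl T, sum_congr rfl fun i => marginal_conditioned_of_mem hT] at hsum
  simp only [sum_const, nsmul_eq_mul, mul_one] at hsum
  linarith

theorem IsEntropicallyIndependent.sum_compl_marginal_conditioned_mul_log_le
    (hEI : IsEntropicallyIndependent α k ν) (hν : IsSliceDistribution k ν) (hk : 0 < k)
    (hT : supersetMass ν T ≠ 0) :
    ∑ i ∈ Tᶜ, marginal (conditioned ν T) i *
        Real.log (marginal (conditioned ν T) i / marginal ν i) ≤
      -Real.log (supersetMass ν T) / α := by
  have hk0 : (0 : ℝ) < k := by exact_mod_cast hk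
  have hmem : 0 ≤ ∑ i ∈ T, marginal (conditioned ν T) i *
      Real.log (marginal (conditioned ν T) i / marginal ν i) := by
    refine sum_nonneg fun i hi => ?_
    rw [marginal_conditioned_of_mem hT hi, one_mul, one_div, Real.log_inv, neg_nonneg]
    exact Real.log_nonpos (hν.marginal_nonneg i) (hν.marginal_le_one i)
  have hall := hEI _ (isSliceDistribution_conditioned hν hT) fun S => conditioned_eq_zero_of_eq_zero
  rw [relEntropy_conditioned hT] at hall
  simp only [relEntropy, div_div_div_cancel_right₀ hk0.ne', div_mul_eq_mul_div] at hall
  rw [← sum_div, ← sum_add_sum_compl T, one_mul, ← div_div,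
    div_le_div_iff_of_pos_right hk0] at hall
  linarith

end Conditioning

section ConditionalMarginal

variable {U : Type*} [Fintype U] [DecidableEq U] {k : ℕ} {ν : Finset U → ℝ} {T : Finset U}

lemma card_mul_condMarginal (hTk : T.card < k) (i : U) :
    ((k : ℝ) - T.card) * condMarginal ν k T i = marginal (conditioned ν T) i := by
  have hkT : (0 : ℝ) < k - T.card := sub_pos.2 (by exact_mod_cast hTk)
  rw [condMarginal, ← marginal_conditioned, mul_div_cancel₀ _ hkT.ne']

namespace IsSliceDistribution

lemma condMarginal_nonneg (hν : IsSliceDistribution k ν) (hTk : T.card ≤ k) (i : U) :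
    0 ≤ condMarginal ν k T i :=
  div_nonneg (div_nonneg (sum_nonneg fun S _ => hν.nonneg S) (hν.supersetMass_nonneg T))
    (sub_nonneg.2 (by exact_mod_cast hTk))

lemma sum_compl_condMarginal (hν : IsSliceDistribution k ν) (hTk : T.card < k)
    (hT : supersetMass ν T ≠ 0) : ∑ i ∈ Tᶜ, condMarginal ν k T i = 1 := by
  have hkT : (0 : ℝ) < k - T.card := sub_pos.2 (by exact_mod_cast hTk)
  refine mul_left_cancel₀ hkT.ne' ?_
  rw [mul_sum, sum_congr rfl fun i _ => card_mul_condMarginal hTk i,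
    hν.sum_compl_marginal_conditioned hT, mul_one]

lemma marginal_pos_of_condMarginal_pos (hν : IsSliceDistribution k ν) (hTk : T.card < k) {i : U}
    (hi : 0 < condMarginal ν k T i) : 0 < marginal ν i := by
  refine (hν.marginal_nonneg i).lt_of_ne' fun h => ?_
  have hcond := card_mul_condMarginal (ν := ν) hTk i
  rw [hν.marginal_conditioned_eq_zero h] at hcond
  have hkT : (0 : ℝ) < k - T.card := sub_pos.2 (by exact_mod_cast hTk)
  exact (mul_pos hkT hi).ne' hcond

end IsSliceDistribution

lemma log_mul_le_add_log_mul_div {q p C k m r : ℝ} (hq : 0 < q) (hp : 0 < p) (hC : 0 < C)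
    (hk : 0 < k) (hm : 0 < m) (hr : 0 < r) (hpC : p ≤ C * k / m) :
    Real.log (q * m) ≤ Real.log C + Real.log (k / r) + Real.log (r * q / p) := by
  rw [← Real.log_mul (by positivity) (by positivity),
    ← Real.log_mul (by positivity) (by positivity)]
  refine Real.log_le_log (by positivity) ?_
  rw [le_div_iff₀ hm] at hpC
  calc q * m = q / p * (p * m) := by field_simp
    _ ≤ q / p * (C * k) := by gcongr
    _ = C * (k / r) * (r * q / p) := by field_simp

variable {α C γ : ℝ}

theorem IsEntropicallyIndependent.sum_condMarginal_mul_log_le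
    (hEI : IsEntropicallyIndependent α k ν) (hν : IsSliceDistribution k ν) (hTk : T.card < k)
    (hT : supersetMass ν T ≠ 0) (hC : 0 < C)
    (hub : ∀ i, marginal ν i ≤ C * k / Fintype.card U) :
    ∑ i ∈ Tᶜ, condMarginal ν k T i * Real.log (condMarginal ν k T i * Fintype.card U) ≤
      Real.log C + Real.log (k / (k - T.card)) +
        -Real.log (supersetMass ν T) / (α * (k - T.card)) := by
  set q := condMarginal ν k T
  set r : ℝ := k - T.card
  set L := Real.log C + Real.log (k / r)
  have hk0 : (0 : ℝ) < k := by exact_mod_cast T.card.zero_le.trans_lt hTk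
  have hr : 0 < r := sub_pos.2 (by exact_mod_cast hTk)
  have hpoint : ∀ i ∈ Tᶜ, q i * Real.log (q i * Fintype.card U) - L * q i ≤
      r⁻¹ * (marginal (conditioned ν T) i *
        Real.log (marginal (conditioned ν T) i / marginal ν i)) := by
    intro i _
    have hm : (0 : ℝ) < Fintype.card U := by exact_mod_cast Fintype.card_pos_iff.2 ⟨i⟩
    rw [← card_mul_condMarginal hTk, mul_assoc, inv_mul_cancel_left₀ hr.ne']
    rcases (hν.condMarginal_nonneg hTk.le i).eq_or_lt with hi | hi
    · simp [q, ← hi]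
    · have hlog := log_mul_le_add_log_mul_div hi (hν.marginal_pos_of_condMarginal_pos hTk hi)
        hC hk0 hm hr (hub i)
      linarith [mul_le_mul_of_nonneg_left hlog hi.le]
  have hsum := sum_le_sum hpoint
  rw [sum_sub_distrib, ← mul_sum, ← mul_sum, hν.sum_compl_condMarginal hTk hT] at hsum
  have hcond := mul_le_mul_of_nonneg_left
    (hEI.sum_compl_marginal_conditioned_mul_log_le hν (by exact_mod_cast hk0) hT)
    (inv_nonneg.2 hr.le)
  rw [inv_mul_eq_div r (-_ / α), div_div] at hcond
  linarith

theorem IsSliceDistribution.sum_condMarginal_mul_rpow_le (hν : IsSliceDistribution k ν)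
    (hTk : T.card < k) (hT : supersetMass ν T ≠ 0) (hγ : 0 ≤ γ) :
    ∑ i ∈ Tᶜ, condMarginal ν k T i * (condMarginal ν k T i * Fintype.card U) ^ γ ≤
      1 + γ * (1 + γ) * (Fintype.card U : ℝ) ^ γ *
        ∑ i ∈ Tᶜ, condMarginal ν k T i * Real.log (condMarginal ν k T i * Fintype.card U) := by
  have hq : ∀ i ∈ Tᶜ, 0 ≤ condMarginal ν k T i := fun i _ => hν.condMarginal_nonneg hTk.le i
  have hq_sum := hν.sum_compl_condMarginal hTk hT
  have hcard : (Tᶜ.card : ℝ) ≤ Fintype.card U := by exact_mod_cast card_le_univ Tᶜ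
  have hm : ∀ i ∈ Tᶜ, (0 : ℝ) < Fintype.card U := fun i _ => by
    exact_mod_cast Fintype.card_pos_iff.2 ⟨i⟩
  have hmoment := sum_mul_div_rpow_le_one_add_sum_mul_log (p := fun _ => (Fintype.card U : ℝ)⁻¹)
    (M := Fintype.card U) hγ hq hq_sum (fun i hi => inv_pos.2 (hm i hi))
    (by
      rw [sum_const, nsmul_eq_mul, ← div_eq_mul_inv]
      exact div_le_one_of_le₀ hcard (Nat.cast_nonneg _))
    (fun i hi => by
      rw [mul_inv_cancel₀ (hm i hi).ne', ← hq_sum]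
      exact single_le_sum hq hi)
  simpa only [div_inv_eq_mul] using hmoment

lemma mul_mul_div_rpow_le {q p C k m : ℝ} (hq : 0 ≤ q) (hC : 0 < C) (hk : 0 < k) (hm : 0 < m)
    (hγ : 0 ≤ γ) (hp : k / (C * m) ≤ p) :
    q * (k * q / p) ^ γ ≤ C ^ γ * (q * (q * m) ^ γ) := by
  have hratio : k * q / p ≤ C * (q * m) :=
    calc k * q / p ≤ k * q / (k / (C * m)) := by gcongr
      _ = C * (q * m) := by field_simp
  calc q * (k * q / p) ^ γ ≤ q * (C * (q * m)) ^ γ := by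
        have hp0 : 0 < p := (by positivity : 0 < k / (C * m)).trans_le hp
        gcongr
    _ = C ^ γ * (q * (q * m) ^ γ) := by rw [Real.mul_rpow hC.le (by positivity)]; ring

lemma IsSliceDistribution.sum_sdiff_condMarginal_mul_rpow_le (hν : IsSliceDistribution k ν)
    (hTk : T.card < k) (hC : 0 < C) (hγ : 0 ≤ γ) {R : Finset U}
    (hlb : ∀ i ∈ R, (k : ℝ) / (C * Fintype.card U) ≤ marginal ν i) :
    ∑ i ∈ R \ T, condMarginal ν k T i * (k * condMarginal ν k T i / marginal ν i) ^ γ ≤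
      C ^ γ * ∑ i ∈ Tᶜ, condMarginal ν k T i *
        (condMarginal ν k T i * Fintype.card U) ^ γ := by
  have hk0 : (0 : ℝ) < k := by exact_mod_cast T.card.zero_le.trans_lt hTk
  have hq := hν.condMarginal_nonneg hTk.le
  rw [mul_sum]
  refine (sum_le_sum fun i hi => ?_).trans (sum_le_sum_of_subset_of_nonneg
    (fun i hi => mem_compl.2 (mem_sdiff.1 hi).2) fun i _ _ => ?_)
  · have hm : (0 : ℝ) < Fintype.card U := by exact_mod_cast Fintype.card_pos_iff.2 ⟨i⟩
    exact mul_mul_div_rpow_le (hq i) hC hk0 hm hγ (hlb i (mem_sdiff.1 hi).1)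
  · have := hq i
    positivity

theorem IsEntropicallyIndependent.sum_condMarginal_mul_log_le_five_mul
    (hEI : IsEntropicallyIndependent α k ν) (hν : IsSliceDistribution k ν) (hα : 0 < α)
    (hk : 0 < k) (hTk : 2 * T.card ≤ k) (hT : supersetMass ν T ≠ 0) (hC : 0 < C)
    (hub : ∀ i, marginal ν i ≤ C * k / Fintype.card U) {A : ℝ} (hCA : Real.log C ≤ A)
    (hcard : T.card ≤ k * A) (hmass : -Real.log (supersetMass ν T) ≤ α * (k * A)) :
    ∑ i ∈ Tᶜ, condMarginal ν k T i * Real.log (condMarginal ν k T i * Fintype.card U) ≤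
      5 * A := by
  have hk0 : (0 : ℝ) < k := by exact_mod_cast hk
  have hkT : (k : ℝ) ≤ 2 * (k - T.card) := by
    have hTk' : (2 : ℝ) * T.card ≤ k := by exact_mod_cast hTk
    linarith
  have hr : (0 : ℝ) < k - T.card := by linarith
  have hA : 0 ≤ A := nonneg_of_mul_nonneg_right (T.card.cast_nonneg.trans hcard) hk0
  have hkA : k * A / (k - T.card) ≤ 2 * A := by
    rw [div_le_iff₀ hr]
    linarith [mul_le_mul_of_nonneg_right hkT hA]
  have hlog : Real.log (k / (k - T.card)) ≤ 2 * A :=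
    calc Real.log (k / (k - T.card)) ≤ k / (k - T.card) - 1 :=
          Real.log_le_sub_one_of_pos (by positivity)
      _ = T.card / (k - T.card) := by rw [div_sub_one hr.ne', sub_sub_cancel]
      _ ≤ k * A / (k - T.card) := by gcongr
      _ ≤ 2 * A := hkA
  have hcost : -Real.log (supersetMass ν T) / (α * (k - T.card)) ≤ 2 * A :=
    calc -Real.log (supersetMass ν T) / (α * (k - T.card))
        ≤ α * (k * A) / (α * (k - T.card)) := by gcongr
      _ = k * A / (k - T.card) := mul_div_mul_left _ _ hα.ne'
      _ ≤ 2 * A := hkA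
  linarith [hEI.sum_condMarginal_mul_log_le hν (by omega) hT hC hub]

lemma rpow_mul_one_add_le_exp {K A : ℝ} (hC : 0 < C) (hCA : Real.log C ≤ A) (hγ : 0 ≤ γ)
    (hγK : γ ≤ K) (hA : 0 ≤ A) : C ^ γ * (1 + K * (5 * A)) ≤ Real.exp (6 * A * K) :=
  calc C ^ γ * (1 + K * (5 * A)) ≤ Real.exp (A * K) * Real.exp (K * (5 * A)) := by
        have hK : 0 ≤ K := hγ.trans hγK
        rw [Real.rpow_def_of_pos hC, add_comm]
        gcongr
        exact Real.add_one_le_exp _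
    _ = Real.exp (6 * A * K) := by rw [← Real.exp_add]; ring_nf

theorem IsEntropicallyIndependent.sum_sdiff_condMarginal_mul_rpow_le_exp
    (hEI : IsEntropicallyIndependent α k ν) (hν : IsSliceDistribution k ν) (hα : 0 < α)
    (hk : 0 < k) (hTk : 2 * T.card ≤ k) (hT : supersetMass ν T ≠ 0) (hC : 0 < C)
    (hub : ∀ i, marginal ν i ≤ C * k / Fintype.card U) {R : Finset U}
    (hlb : ∀ i ∈ R, (k : ℝ) / (C * Fintype.card U) ≤ marginal ν i) (hγ : 0 ≤ γ) {A : ℝ}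
    (hCA : Real.log C ≤ A) (hcard : T.card ≤ k * A)
    (hmass : -Real.log (supersetMass ν T) ≤ α * (k * A)) :
    ∑ i ∈ R \ T, condMarginal ν k T i * (k * condMarginal ν k T i / marginal ν i) ^ γ ≤
      Real.exp (6 * A * (γ * (1 + γ) * (Fintype.card U : ℝ) ^ γ)) := by
  have hA : 0 ≤ A := nonneg_of_mul_nonneg_right (T.card.cast_nonneg.trans hcard)
    (by exact_mod_cast hk)
  have hm : (1 : ℝ) ≤ Fintype.card U := by exact_mod_cast hk.trans_le hν.le_card
  have hlt : T.card < k := by omega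
  set q := condMarginal ν k T
  set K := γ * (1 + γ) * (Fintype.card U : ℝ) ^ γ
  have hγK : γ ≤ K := le_mul_one_add_mul_rpow hm hγ
  calc ∑ i ∈ R \ T, q i * (k * q i / marginal ν i) ^ γ
      ≤ C ^ γ * ∑ i ∈ Tᶜ, q i * (q i * Fintype.card U) ^ γ :=
        hν.sum_sdiff_condMarginal_mul_rpow_le hlt hC hγ hlb
    _ ≤ C ^ γ * (1 + K * ∑ i ∈ Tᶜ, q i * Real.log (q i * Fintype.card U)) := by
        gcongr
        exact hν.sum_condMarginal_mul_rpow_le hlt hT hγ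
    _ ≤ C ^ γ * (1 + K * (5 * A)) := by
        gcongr C ^ γ * (1 + ?_)
        exact mul_le_mul_of_nonneg_left
          (hEI.sum_condMarginal_mul_log_le_five_mul hν hα hk hTk hT hC hub hCA hcard hmass)
          (hγ.trans hγK)
    _ ≤ Real.exp (6 * A * K) := rpow_mul_one_add_le_exp hC hCA hγ hγK hA

lemma one_le_log_one_div {ε : ℝ} (hε : ε ∈ Set.Ioc (0 : ℝ) (Real.exp 1)⁻¹) :
    1 ≤ Real.log (1 / ε) := by
  rw [one_div, Real.le_log_iff_exp_le (inv_pos.2 hε.1)]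
  exact (le_inv_comm₀ hε.1 (Real.exp_pos 1)).1 hε.2

lemma IsSliceDistribution.inv_choose_mul_supersetMass_le (hν : IsSliceDistribution k ν) (t : ℕ)
    (T : Finset U) : (k.choose t : ℝ)⁻¹ * supersetMass ν T ≤ supersetMass ν T :=
  mul_le_of_le_one_left (hν.supersetMass_nonneg T) (Nat.cast_inv_le_one _)

theorem single_step_moment_bound_general (hEI : IsEntropicallyIndependent α k ν)
    (hν : IsSliceDistribution k ν) (hα : α ∈ Set.Ioc (0 : ℝ) 1) (hk : 0 < k)
    (hTk : 2 * T.card ≤ k) {ε : ℝ} (hε : ε ∈ Set.Ioc (0 : ℝ) (Real.exp 1)⁻¹)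
    (hT : ε ^ T.card ≤ supersetMass ν T) (hC : 0 < C)
    (hCε : C ≤ 1 + T.card / (α * k) * Real.log (1 / ε))
    (hub : ∀ i, marginal ν i ≤ C * k / Fintype.card U) {R : Finset U}
    (hlb : ∀ i ∈ R, (k : ℝ) / (C * Fintype.card U) ≤ marginal ν i) (hγ : 0 ≤ γ) :
    ∑ i ∈ R \ T, condMarginal ν k T i * (k * condMarginal ν k T i / marginal ν i) ^ γ ≤
      Real.exp (6 * (T.card / (α * k) * Real.log (1 / ε)) *
        (γ * (1 + γ) * (Fintype.card U : ℝ) ^ γ)) := by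
  obtain ⟨hα0, hα1⟩ := hα
  have hk0 : (k : ℝ) ≠ 0 := Nat.cast_ne_zero.2 hk.ne'
  have hlogε := one_le_log_one_div hε
  have hεT : 0 < ε ^ T.card := pow_pos hε.1 _
  refine hEI.sum_sdiff_condMarginal_mul_rpow_le_exp hν hα0 hk hTk (hεT.trans_le hT).ne' hC hub
    hlb hγ ?_ ?_ ?_
  · linarith [Real.log_le_sub_one_of_pos hC]
  · calc (T.card : ℝ) ≤ T.card / α * Real.log (1 / ε) :=
          (le_div_self T.card.cast_nonneg hα0 hα1).trans
            (le_mul_of_one_le_right (by positivity) hlogε)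
      _ = k * (T.card / (α * k) * Real.log (1 / ε)) := by field_simp [hk0]
  · calc -Real.log (supersetMass ν T) ≤ -Real.log (ε ^ T.card) :=
          neg_le_neg (Real.log_le_log hεT hT)
      _ = T.card * Real.log (1 / ε) := by rw [Real.log_pow, one_div, Real.log_inv, mul_neg]
      _ = α * (k * (T.card / (α * k) * Real.log (1 / ε))) := by field_simp [hk0]

end ConditionalMarginal

/-- Single-step moment (submartingale) bound controlling the acceptance
probability of batched rejection sampling, for an entropically independent distribution
`ν` on `binom(U,k)` with bounded marginals:
`∑_{i∈R∖T} ν_{t+1|T}(i)·(k·ν_{t+1|T}(i)/p_i)^γ ≤ exp(τ)`. -/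
theorem single_step_moment_bound (U : Type*) [Fintype U] [DecidableEq U]
    (m k : ℕ) (hm : Fintype.card U = m) (hk : 0 < k)
    (α : ℝ) (hα : α ∈ Set.Ioc (0 : ℝ) 1)
    (ν : Finset U → ℝ)
    (hnn : ∀ S, 0 ≤ ν S) (hsupp : ∀ S, ν S ≠ 0 → S.card = k)
    (hsum : ∑ S, ν S = 1)
    -- ν is (1/α)-entropically independent
    (hEI : ∀ ρ : Finset U → ℝ, (∀ S, 0 ≤ ρ S) → (∀ S, ρ S ≠ 0 → S.card = k) →
      (∑ S, ρ S = 1) → (∀ S, ν S = 0 → ρ S = 0) →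
      ∑ i : U,
          ((∑ S ∈ univ.filter (fun S : Finset U => i ∈ S), ρ S) / k) *
            Real.log (((∑ S ∈ univ.filter (fun S : Finset U => i ∈ S), ρ S) / k) /
              ((∑ S ∈ univ.filter (fun S : Finset U => i ∈ S), ν S) / k)) ≤
        1 / (α * k) * ∑ S, ρ S * Real.log (ρ S / ν S))
    (p : U → ℝ)
    (hp : ∀ i, p i = ∑ S ∈ univ.filter (fun S : Finset U => i ∈ S), ν S)
    (β : ℝ) (hβ : β ∈ Set.Ioo (0 : ℝ) 1)
    (C : ℝ) (hC : C = 1 + Real.sqrt β)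
    (R : Finset U)
    (hub : ∀ i : U, p i ≤ C * k / m)
    (hlb : ∀ i ∈ R, (k : ℝ) / (C * m) ≤ p i)
    (ε : ℝ) (hε : ε ∈ Set.Ioc (0 : ℝ) (Real.exp 1)⁻¹)
    (t : ℕ) (ht1 : 1 ≤ t) (ht2 : 2 * t ≤ k)
    (T : Finset U) (hT : T.card = t)
    (hνt : ε ^ t ≤ ((k.choose t : ℝ))⁻¹ *
      ∑ S ∈ univ.filter (fun S : Finset U => T ⊆ S), ν S)
    (γ : ℝ) (hγ : 0 < γ)
    (hβγ : Real.sqrt β ≤ min (1 / (3 * γ)) ((t / (α * k)) * Real.log (1 / ε)))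
    (τ : ℝ)
    (hτ : (m : ℝ) ^ γ * (γ * (1 + γ)) * (12 * t / (α * k)) * Real.log (1 / ε) ≤ τ)
    -- conditional marginal distribution ν_{t+1|T}
    (q : U → ℝ)
    (hq : ∀ i, q i =
      (∑ S ∈ univ.filter (fun S : Finset U => T ⊆ S ∧ i ∈ S), ν S) /
        (∑ S ∈ univ.filter (fun S : Finset U => T ⊆ S), ν S) / ((k : ℝ) - t)) :
    ∑ i ∈ R \ T, q i * ((k : ℝ) * q i / p i) ^ γ ≤ Real.exp τ := by
  subst hm hT hC
  obtain rfl : p = marginal ν := funext hp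
  obtain rfl : q = condMarginal ν k T := funext hq
  have hν : IsSliceDistribution k ν := ⟨hnn, hsupp, hsum⟩
  have hβε := hβγ.trans (min_le_right _ _)
  have hA : 0 ≤ T.card / (α * k) * Real.log (1 / ε) := (Real.sqrt_nonneg β).trans hβε
  refine (single_step_moment_bound_general
    (fun ρ hρ => hEI ρ hρ.nonneg hρ.card_eq hρ.sum_eq_one) hν hα hk ht2 hε
    (hνt.trans (hν.inv_choose_mul_supersetMass_le _ T)) (by positivity) (by gcongr) hub hlb
    hγ.le).trans (Real.exp_le_exp.2 (le_trans ?_ hτ))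
  have hAγ := mul_nonneg hA (by positivity : 0 ≤ γ * (1 + γ) * (Fintype.card U : ℝ) ^ γ)
  rw [mul_div_assoc]
  linarith
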